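/- Let C be a regular category and X an object with global support. Then X is regularly-coextensive if and only if for every regular epimorphism q : X → Q and every binary product diagram (π₁ : X → A, π₂ : X → B), there exist morphisms q₁ : A → Q₁, q₂ : B → Q₂, p₁ : Q → Q₁ and p₂ : Q → Q₂ such that q₁∘π₁ = p₁∘q and q₂∘π₂ = p₂∘q and the pair (p₁ : Q → Q₁, p₂ : Q → Q₂) is a binary product diagram. -/

import Mathlib

open CategoryTheory CategoryTheory.Limits

universe v u

variable {C : Type u} [Category.{v} C]

/-- `(p, q)` is a binary product diagram, exhibiting `X` as the product of `A` and `B`. -/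
def IsBinaryProduct {X A B : C} (p : X ⟶ A) (q : X ⟶ B) : Prop :=
  Nonempty (IsLimit (BinaryFan.mk p q))

/-- `p : X ⟶ A` is a product projection. -/
def IsProductProjection {X A : C} (p : X ⟶ A) : Prop :=
  ∃ (B : C) (q : X ⟶ B), IsBinaryProduct p q

/-- A pushout square whose two legs belong to the class `M`. -/
def IsMPushout (M : MorphismProperty C) {Z A B P : C}
    (f : Z ⟶ A) (g : Z ⟶ B) (a : A ⟶ P) (b : B ⟶ P) : Prop :=
  IsPushout f g a b ∧ M a ∧ M b

/-- `X` is an `M`-coextensive object. -/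
structure MCoextensive (M : MorphismProperty C) (X : C) : Prop where
  pushout_exists : ∀ ⦃Y A : C⦄ (m : X ⟶ Y) (p : X ⟶ A), M m → IsProductProjection p →
    ∃ (P : C) (a : A ⟶ P) (b : Y ⟶ P), IsMPushout M p m a b
  isBinaryProduct_iff : ∀ ⦃A₁ A₂ Y B₁ B₂ : C⦄ (π₁ : X ⟶ A₁) (π₂ : X ⟶ A₂)
    (f : X ⟶ Y) (p₁ : A₁ ⟶ B₁) (p₂ : A₂ ⟶ B₂) (π₁' : Y ⟶ B₁) (π₂' : Y ⟶ B₂),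
    IsBinaryProduct π₁ π₂ → M f → M p₁ → M p₂ →
    π₁ ≫ p₁ = f ≫ π₁' → π₂ ≫ p₂ = f ≫ π₂' →
    (IsBinaryProduct π₁' π₂' ↔ (IsMPushout M π₁ f p₁ π₁' ∧ IsMPushout M π₂ f p₂ π₂'))

/-- The class of product projections. -/
def projections (C : Type u) [Category.{v} C] : MorphismProperty C :=
  fun _ _ f => IsProductProjection f

/-- `X` is projection-coextensive. -/
def ProjectionCoextensive (X : C) : Prop := MCoextensive (projections C) X

/-- `f` is a regular epimorphism (a coequalizer of some parallel pair). -/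
def IsRegularEpimorphism {X Y : C} (f : X ⟶ Y) : Prop :=
  ∃ (W : C) (a b : W ⟶ X) (h : a ≫ f = b ≫ f), Nonempty (IsColimit (Cofork.ofπ f h))

/-- The class of regular epimorphisms. -/
def regularEpis (C : Type u) [Category.{v} C] : MorphismProperty C :=
  fun _ _ f => IsRegularEpimorphism f

/-- `X` is regularly-coextensive. -/
def RegularlyCoextensive (X : C) : Prop := MCoextensive (regularEpis C) X

/-- A regular category: finitely complete, coequalizers of kernel pairs, and
regular epimorphisms are stable under pullback. -/
class IsRegularCategory (C : Type u) [Category.{v} C] [HasFiniteLimits C] : Prop where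
  hasCoequalizer_kernelPair : ∀ {X Y : C} (f : X ⟶ Y),
    HasCoequalizer (pullback.fst f f) (pullback.snd f f)
  regularEpi_stable : ∀ {X Y Z : C} (f : X ⟶ Y) (g : Z ⟶ Y),
    IsRegularEpimorphism f → IsRegularEpimorphism (pullback.snd f g)

/-- `X` has global support: the unique morphism to the terminal object is a regular epi. -/
def HasGlobalSupport [HasTerminal C] (X : C) : Prop :=
  IsRegularEpimorphism (terminal.from X)

/-!
Suppose that squares over a regular epimorphism `q : X ⟶ Q` connect a product diagram `(π₁, π₂)` on
`X` to a product diagram `(p₁, p₂)` on `Q`. Such squares are automatically pushouts. Indeed, let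
`q₁ : A ⟶ Q₁` be the coequalizer of `k₁, k₂ : K ⟶ A`. The maps `k₁ × B, k₂ × B : K × B ⟶ A × B ≅ X`
are identified by `q`, since `p₁` and `p₂` are jointly monic. Hence a map out of `A` which agrees on
`X` with a map out of `Q` coequalizes `k₁` and `k₂` after precomposition with the projection
`K × B ⟶ K`, which is epic because `B` has global support. As pushouts are unique up to isomorphism,
one product diagram on `Q` therefore suffices for coextensivity.
-/

/-- Binary product diagrams on `X` descend along the morphisms `q : X ⟶ Q` in `M`: each of them is
connected to some binary product diagram on `Q` by a pair of commutative squares over `q`. -/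
def DescendsBinaryProducts (M : MorphismProperty C) (X : C) : Prop :=
  ∀ ⦃Q A B : C⦄ (q : X ⟶ Q) (π₁ : X ⟶ A) (π₂ : X ⟶ B), M q → IsBinaryProduct π₁ π₂ →
    ∃ (Q₁ Q₂ : C) (q₁ : A ⟶ Q₁) (q₂ : B ⟶ Q₂) (p₁ : Q ⟶ Q₁) (p₂ : Q ⟶ Q₂),
      π₁ ≫ q₁ = q ≫ p₁ ∧ π₂ ≫ q₂ = q ≫ p₂ ∧ IsBinaryProduct p₁ p₂

theorem isRegularEpimorphism_iff_isRegularEpi {X Y : C} (f : X ⟶ Y) :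
    IsRegularEpimorphism f ↔ IsRegularEpi f :=
  ⟨fun ⟨W, a, b, h, ⟨hc⟩⟩ => ⟨⟨⟨W, a, b, h, hc⟩⟩⟩, fun ⟨⟨⟨W, a, b, h, hc⟩⟩⟩ => ⟨W, a, b, h, ⟨hc⟩⟩⟩

theorem isPushout_of_isColimit_cofork {X A Q P K T : C} {f : X ⟶ A} {q : X ⟶ Q} {a : A ⟶ P}
    {b : Q ⟶ P} [Epi q] (sq : CommSq f q a b) {k₁ k₂ : K ⟶ A} {w : k₁ ≫ a = k₂ ≫ a}
    (ha : IsColimit (Cofork.ofπ a w)) (t : T ⟶ K) [Epi t] {l₁ l₂ : T ⟶ X}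
    (hl : l₁ ≫ q = l₂ ≫ q) (h₁ : l₁ ≫ f = t ≫ k₁) (h₂ : l₂ ≫ f = t ≫ k₂) :
    IsPushout f q a b := by
  have : Epi a := Cofork.IsColimit.epi ha
  have coequalizes (s : PushoutCocone f q) : k₁ ≫ s.inl = k₂ ≫ s.inl := by
    rw [← cancel_epi t]
    calc t ≫ k₁ ≫ s.inl = l₁ ≫ q ≫ s.inr := by rw [← reassoc_of% h₁, s.condition]
      _ = l₂ ≫ q ≫ s.inr := by rw [reassoc_of% hl]
      _ = t ≫ k₂ ≫ s.inl := by rw [← reassoc_of% h₂, s.condition]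
  have fac (s : PushoutCocone f q) :
      a ≫ Cofork.IsColimit.desc ha s.inl (coequalizes s) = s.inl :=
    Cofork.IsColimit.π_desc' ha s.inl (coequalizes s)
  refine ⟨sq, ⟨PushoutCocone.IsColimit.mk _
    (fun s => Cofork.IsColimit.desc ha s.inl (coequalizes s)) fac (fun s => ?_)
    fun s m hm _ => ?_⟩⟩
  · rw [← cancel_epi q, ← sq.w_assoc, fac, s.condition]
  · rw [← cancel_epi a, hm, fac]

namespace IsBinaryProduct

variable {X A B Q Q₁ Q₂ : C} {π₁ : X ⟶ A} {π₂ : X ⟶ B} {q : X ⟶ Q}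
  {q₁ : A ⟶ Q₁} {q₂ : B ⟶ Q₂} {p₁ : Q ⟶ Q₁} {p₂ : Q ⟶ Q₂}

theorem symm (h : IsBinaryProduct π₁ π₂) : IsBinaryProduct π₂ π₁ :=
  ⟨BinaryFan.isLimitFlip h.some⟩

theorem exists_lift {T : C} (h : IsBinaryProduct π₁ π₂) (a : T ⟶ A) (b : T ⟶ B) :
    ∃ l : T ⟶ X, l ≫ π₁ = a ∧ l ≫ π₂ = b :=
  let ⟨l, hl₁, hl₂⟩ := BinaryFan.IsLimit.lift' h.some a b
  ⟨l, hl₁, hl₂⟩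

theorem hom_ext {T : C} (h : IsBinaryProduct π₁ π₂) {l l' : T ⟶ X} (h₁ : l ≫ π₁ = l' ≫ π₁)
    (h₂ : l ≫ π₂ = l' ≫ π₂) : l = l' :=
  BinaryFan.IsLimit.hom_ext h.some h₁ h₂

theorem comp_iso {R₁ R₂ : C} (h : IsBinaryProduct p₁ p₂) (e₁ : Q₁ ≅ R₁) (e₂ : Q₂ ≅ R₂) :
    IsBinaryProduct (p₁ ≫ e₁.hom) (p₂ ≫ e₂.hom) :=
  ⟨BinaryFan.isLimitCompRightIso _ e₂.hom (BinaryFan.isLimitCompLeftIso _ e₁.hom h.some)⟩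

theorem of_isPushout {R₁ R₂ : C} {r₁ : A ⟶ R₁} {r₂ : B ⟶ R₂} {s₁ : Q ⟶ R₁} {s₂ : Q ⟶ R₂}
    (h : IsBinaryProduct p₁ p₂) (hp₁ : IsPushout π₁ q q₁ p₁) (hp₂ : IsPushout π₂ q q₂ p₂)
    (hs₁ : IsPushout π₁ q r₁ s₁) (hs₂ : IsPushout π₂ q r₂ s₂) : IsBinaryProduct s₁ s₂ := by
  simpa only [IsPushout.inr_isoIsPushout_hom] using
    h.comp_iso (hp₁.isoIsPushout _ _ hs₁) (hp₂.isoIsPushout _ _ hs₂)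

theorem property_fst [HasTerminal C] {P : MorphismProperty C} [P.IsStableUnderBaseChange]
    (h : IsBinaryProduct π₁ π₂) (hB : P (terminal.from B)) : P π₁ :=
  P.of_isPullback (IsPullback.of_is_product' h.some terminalIsTerminal).flip hB

theorem isPushout [HasBinaryProducts C] [Epi q] [IsRegularEpi q₁]
    (hπ : IsBinaryProduct π₁ π₂) (hB : ∀ K : C, Epi (prod.fst : K ⨯ B ⟶ K))
    (hp : IsBinaryProduct p₁ p₂) (w₁ : π₁ ≫ q₁ = q ≫ p₁) (w₂ : π₂ ≫ q₂ = q ≫ p₂) :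
    IsPushout π₁ q q₁ p₁ := by
  let k₁ := IsRegularEpi.left q₁
  let k₂ := IsRegularEpi.right q₁
  have hk : k₁ ≫ q₁ = k₂ ≫ q₁ := IsRegularEpi.w q₁
  let t : IsRegularEpi.W q₁ ⨯ B ⟶ IsRegularEpi.W q₁ := prod.fst
  have : Epi t := hB _
  obtain ⟨l₁, hl₁A, hl₁B⟩ := hπ.exists_lift (t ≫ k₁) prod.snd
  obtain ⟨l₂, hl₂A, hl₂B⟩ := hπ.exists_lift (t ≫ k₂) prod.snd
  have hl : l₁ ≫ q = l₂ ≫ q := by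
    apply hp.hom_ext
    · simp only [Category.assoc, ← w₁, reassoc_of% hl₁A, reassoc_of% hl₂A, hk]
    · simp only [Category.assoc, ← w₂, reassoc_of% hl₁B, reassoc_of% hl₂B]
  exact isPushout_of_isColimit_cofork ⟨w₁⟩ (IsRegularEpi.isColimit q₁) t hl hl₁A hl₂A

end IsBinaryProduct

section Coextensive

variable {M : MorphismProperty C} {X : C}

theorem MCoextensive.descendsBinaryProducts (h : MCoextensive M X) :
    DescendsBinaryProducts M X := by
  intro Q A B q π₁ π₂ hq hπ
  obtain ⟨Q₁, q₁, p₁, h₁⟩ := h.pushout_exists q π₁ hq ⟨_, _, hπ⟩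
  obtain ⟨Q₂, q₂, p₂, h₂⟩ := h.pushout_exists q π₂ hq ⟨_, _, hπ.symm⟩
  have hp : IsBinaryProduct p₁ p₂ :=
    (h.isBinaryProduct_iff π₁ π₂ q q₁ q₂ p₁ p₂ hπ hq h₁.2.1 h₂.2.1 h₁.1.w h₂.1.w).2 ⟨h₁, h₂⟩
  exact ⟨Q₁, Q₂, q₁, q₂, p₁, p₂, h₁.1.w, h₂.1.w, hp⟩

theorem DescendsBinaryProducts.mCoextensive (h : DescendsBinaryProducts M X)
    (isMPushout_fst : ∀ {Q A B Q₁ Q₂ : C} {q : X ⟶ Q} {π₁ : X ⟶ A} {π₂ : X ⟶ B} {q₁ : A ⟶ Q₁}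
      {q₂ : B ⟶ Q₂} {p₁ : Q ⟶ Q₁} {p₂ : Q ⟶ Q₂}, M q → IsBinaryProduct π₁ π₂ →
      IsBinaryProduct p₁ p₂ → π₁ ≫ q₁ = q ≫ p₁ → π₂ ≫ q₂ = q ≫ p₂ → IsMPushout M π₁ q q₁ p₁) :
    MCoextensive M X where
  pushout_exists := by
    rintro Y A m π₁ hm ⟨B, π₂, hπ⟩
    obtain ⟨Q₁, _, q₁, _, p₁, _, w₁, w₂, hp⟩ := h m π₁ π₂ hm hπ
    exact ⟨Q₁, q₁, p₁, isMPushout_fst hm hπ hp w₁ w₂⟩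
  isBinaryProduct_iff := by
    intro A₁ A₂ Y B₁ B₂ π₁ π₂ f p₁ p₂ π₁' π₂' hπ hf _ _ w₁ w₂
    constructor
    · intro hπ'
      exact ⟨isMPushout_fst hf hπ hπ' w₁ w₂, isMPushout_fst hf hπ.symm hπ'.symm w₂ w₁⟩
    · rintro ⟨⟨hs₁, _⟩, hs₂, _⟩
      obtain ⟨_, _, _, _, _, _, v₁, v₂, hr⟩ := h f π₁ π₂ hf hπ
      exact hr.of_isPushout (isMPushout_fst hf hπ hr v₁ v₂).1
        (isMPushout_fst hf hπ.symm hr.symm v₂ v₁).1 hs₁ hs₂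

end Coextensive

instance IsRegularCategory.regular [HasFiniteLimits C] [IsRegularCategory C] : Regular C where
  hasCoequalizer_of_isKernelPair {_ _ _ f g₁ g₂} h := by
    have := IsRegularCategory.hasCoequalizer_kernelPair f
    exact hasColimit_of_iso (parallelPair.ext h.isoPullback (Iso.refl _) :
      parallelPair g₁ g₂ ≅ parallelPair (pullback.fst f f) (pullback.snd f f))
  regularEpiIsStableUnderBaseChange := by
    refine .mk' fun X Y S f g _ hg => ?_
    have hsnd : IsRegularEpimorphism (pullback.snd g f) :=
      IsRegularCategory.regularEpi_stable g f ((isRegularEpimorphism_iff_isRegularEpi g).2 hg)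
    rw [← pullbackSymmetry_hom_comp_snd]
    exact (MorphismProperty.cancel_left_of_respectsIso (.regularEpi C) _ _).2 <|
      (isRegularEpimorphism_iff_isRegularEpi _).1 hsnd

section Regular

variable [Regular C]

theorem HasGlobalSupport.of_hom {X Y : C} (hX : HasGlobalSupport X) (f : X ⟶ Y) :
    HasGlobalSupport Y := by
  rw [HasGlobalSupport, isRegularEpimorphism_iff_isRegularEpi, ← terminal.comp_from f] at hX
  have := strongEpi_of_strongEpi f (terminal.from Y)
  exact (isRegularEpimorphism_iff_isRegularEpi _).2 inferInstance

theorem IsBinaryProduct.isRegularEpi_fst {X A B : C} {π₁ : X ⟶ A} {π₂ : X ⟶ B}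
    (h : IsBinaryProduct π₁ π₂) (hB : HasGlobalSupport B) : IsRegularEpi π₁ :=
  have := Regular.regularEpiIsStableUnderBaseChange (C := C)
  h.property_fst (P := .regularEpi C) ((isRegularEpimorphism_iff_isRegularEpi _).1 hB)

theorem HasGlobalSupport.isMPushout_regularEpis {X A B Q Q₁ Q₂ : C} (hX : HasGlobalSupport X)
    {q : X ⟶ Q} {π₁ : X ⟶ A} {π₂ : X ⟶ B} {q₁ : A ⟶ Q₁} {q₂ : B ⟶ Q₂} {p₁ : Q ⟶ Q₁}
    {p₂ : Q ⟶ Q₂} (hq : IsRegularEpimorphism q) (hπ : IsBinaryProduct π₁ π₂)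
    (hp : IsBinaryProduct p₁ p₂) (w₁ : π₁ ≫ q₁ = q ≫ p₁) (w₂ : π₂ ≫ q₂ = q ≫ p₂) :
    IsMPushout (regularEpis C) π₁ q q₁ p₁ := by
  have : IsRegularEpi q := (isRegularEpimorphism_iff_isRegularEpi q).1 hq
  have hp₁ : IsRegularEpi p₁ := hp.isRegularEpi_fst (hX.of_hom (q ≫ p₂))
  have hq₁ : IsRegularEpi q₁ := by
    have : StrongEpi (π₁ ≫ q₁) := w₁ ▸ strongEpi_comp q p₁
    have : StrongEpi q₁ := strongEpi_of_strongEpi π₁ q₁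
    infer_instance
  have epi_fst (K : C) : Epi (prod.fst : K ⨯ B ⟶ K) :=
    have := IsBinaryProduct.isRegularEpi_fst ⟨prodIsProd K B⟩ (hX.of_hom π₂)
    inferInstance
  exact ⟨hπ.isPushout epi_fst hp w₁ w₂, (isRegularEpimorphism_iff_isRegularEpi q₁).2 hq₁,
    (isRegularEpimorphism_iff_isRegularEpi p₁).2 hp₁⟩

end Regular

/-- An object with global support in a regular category is regularly-coextensive if
and only if every regular epimorphic quotient of it pushes every binary product
diagram to a binary product diagram. -/
theorem regularlyCoextensive_iff
    {C : Type u} [Category.{v} C] [HasFiniteLimits C] [IsRegularCategory C]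
    (X : C) (hgs : HasGlobalSupport X) :
    RegularlyCoextensive X ↔
      ∀ ⦃Q A B : C⦄ (q : X ⟶ Q) (π₁ : X ⟶ A) (π₂ : X ⟶ B),
        IsRegularEpimorphism q → IsBinaryProduct π₁ π₂ →
        ∃ (Q₁ Q₂ : C) (q₁ : A ⟶ Q₁) (q₂ : B ⟶ Q₂) (p₁ : Q ⟶ Q₁) (p₂ : Q ⟶ Q₂),
          π₁ ≫ q₁ = q ≫ p₁ ∧ π₂ ≫ q₂ = q ≫ p₂ ∧ IsBinaryProduct p₁ p₂ :=
  ⟨MCoextensive.descendsBinaryProducts,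
    fun h => DescendsBinaryProducts.mCoextensive h hgs.isMPushout_regularEpis⟩
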